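/- Let T ∈ ℕ with T ≥ 1, r > 0, κ > 0, α₀, β₀ ∈ ℝ, and set λ = (3T−1)/(2πr). Assume (B1) 0 ≤ λ < 1/2, (B2) πλ < α₀/r < π(1−λ), (B3) πλ < −β₀/r < π(1−λ), and (B4) (α₀−β₀)/r < π(1 − 2(T+1)λ/(3T−1)). Then for every (t,x) ∈ Λ*_{2T}: ϑ₁(η_j/π; iκ) ≠ 0 for each j = 1,…,5, and the elementary weight q(t,x) = ∏_{j=1}^{5} [ϑ₁(ζ_j/π; iκ) / ϑ₁(η_j/π; iκ)] is a strictly positive real number. Consequently all lattice-path transition weights built from these elementary weights, and hence the excursion measure P^{0,0}_{2T}, are nonnegative, so P^{0,0}_{2T} is a probability measure. -/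

import Mathlib

open scoped Real

/-- The Jacobi theta function `ϑ₁(v; τ)`, defined by its series
`ϑ₁(v; τ) = 2 ∑_{n=1}^∞ (−1)^{n−1} exp(πiτ(n−1/2)²) sin((2n−1)πv)`
(reindexed over `n : ℕ` starting from `0`). -/
noncomputable def theta1 (v τ : ℂ) : ℂ :=
  2 * ∑' n : ℕ, (-1 : ℂ) ^ n * Complex.exp (π * Complex.I * τ * ((n : ℂ) + 1 / 2) ^ 2) *
    Complex.sin ((2 * (n : ℂ) + 1) * π * v)

/-- The region `Λ*_{2T}` of spatio-temporal points that can carry a rightward step. -/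
def LambdaStar (T : ℕ) : Set (ℤ × ℤ) :=
  {p | Even (p.1 + p.2) ∧
    ((1 ≤ p.1 ∧ p.1 ≤ (T : ℤ) ∧ -p.1 + 2 ≤ p.2 ∧ p.2 ≤ p.1) ∨
     ((T : ℤ) + 1 ≤ p.1 ∧ p.1 ≤ 2 * (T : ℤ) ∧ p.1 - 2 * (T : ℤ) ≤ p.2 ∧
       p.2 ≤ -p.1 + 2 * (T : ℤ)))}

/-- The numerator arguments `ζ₁, …, ζ₅`. -/
noncomputable def zetaArg (T : ℕ) (r α₀ β₀ : ℝ) (t x : ℤ) : Fin 5 → ℝ :=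
  ![(2 * α₀ - (3 * (T : ℝ) + 1) + (3 * (t : ℝ) - (x : ℝ))) / (2 * r),
    (2 * β₀ - (3 * (T : ℝ) + 1) + 2 * ((t : ℝ) + (x : ℝ))) / (2 * r),
    (2 * β₀ - (3 * (T : ℝ) + 1) + 2 * ((t : ℝ) + (x : ℝ))) / (2 * r) - 1 / r,
    (2 * (α₀ - β₀) - ((t : ℝ) + (x : ℝ))) / (2 * r),
    (2 * (α₀ - β₀) - ((t : ℝ) + (x : ℝ))) / (2 * r) + 1 / r]

/-- The denominator arguments `η₁, …, η₅`. -/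
noncomputable def etaArg (T : ℕ) (r α₀ β₀ : ℝ) (t x : ℤ) : Fin 5 → ℝ :=
  ![(2 * α₀ - (3 * (T : ℝ) + 1) + ((t : ℝ) + (x : ℝ))) / (2 * r),
    (2 * β₀ - (3 * (T : ℝ) + 1) + (3 * (t : ℝ) + (x : ℝ))) / (2 * r),
    (2 * β₀ - (3 * (T : ℝ) + 1) + (3 * (t : ℝ) + (x : ℝ))) / (2 * r) - 1 / r,
    (α₀ - β₀ - (x : ℝ)) / r,
    (α₀ - β₀ - (x : ℝ)) / r + 1 / r]

/-!
The Jacobi triple product is the limit of a finite identity: with `1 / (p; p)ₙ` read as `0` for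
negative `n`, the finite sums over `k : ℤ` and the finite products obey the same two recursions.
It turns the series of `ϑ₁` into
`ϑ₁(v; τ) = 2 exp(πiτ/4) sin(πv) ∏_{n ≥ 1} (1 - pⁿ)(1 - pⁿ w)(1 - pⁿ w⁻¹)`, with
`p = exp(2πiτ)` and `w = exp(2πiv)`. For real `v` and `τ = iκ` every factor other than `sin(πv)`
contributes positively, so `ϑ₁(u/π; iκ)` has the sign of `sin u`. Clearing denominators, the
conditions (B2)–(B4) place `ζ_j` and `η_j` in a common interval `(0, π)` or `(-π, 0)`.
-/

section QPochhammer

variable {K : Type*} [Field K]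

/-- The finite `q`-Pochhammer symbol `(a; p)ₙ = ∏_{i < n} (1 - a pⁱ)`. -/
def qPochhammer (a p : K) (n : ℕ) : K :=
  ∏ i ∈ Finset.range n, (1 - a * p ^ i)

lemma qPochhammer_succ (a p : K) (n : ℕ) :
    qPochhammer a p (n + 1) = qPochhammer a p n * (1 - a * p ^ n) :=
  Finset.prod_range_succ _ n

/-- The reciprocal `1 / (p; p)ₙ`, extended by `0` to negative `n`: with this convention the
recursion `one_sub_zpow_mul_invQFactorial` holds for every integer `n`, so sums over `ℤ` need no
boundary terms. -/
def invQFactorial (p : K) : ℤ → K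
  | Int.ofNat n => (qPochhammer p p n)⁻¹
  | Int.negSucc _ => 0

@[simp]
lemma invQFactorial_natCast (p : K) (n : ℕ) : invQFactorial p n = (qPochhammer p p n)⁻¹ := rfl

lemma invQFactorial_of_neg (p : K) {n : ℤ} (hn : n < 0) : invQFactorial p n = 0 := by
  obtain ⟨m, rfl⟩ := Int.eq_negSucc_of_lt_zero hn
  rfl

lemma one_sub_zpow_mul_invQFactorial {p : K} (hp : ∀ n : ℕ, p ^ (n + 1) ≠ 1) (n : ℤ) :
    (1 - p ^ n) * invQFactorial p n = invQFactorial p (n - 1) := by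
  rcases lt_trichotomy n 0 with hn | rfl | hn
  · rw [invQFactorial_of_neg p hn, invQFactorial_of_neg p (by lia), mul_zero]
  · rw [zpow_zero, sub_self, zero_mul, invQFactorial_of_neg p (by lia)]
  · obtain ⟨m, rfl⟩ : ∃ m : ℕ, n = (m + 1 : ℕ) := ⟨n.toNat - 1, by lia⟩
    have hm : 1 - p ^ (m + 1) ≠ 0 := sub_ne_zero.2 (hp m).symm
    rw [show ((m + 1 : ℕ) : ℤ) - 1 = m by lia, zpow_natCast, invQFactorial_natCast,
      invQFactorial_natCast, qPochhammer_succ, ← pow_succ', mul_inv, mul_left_comm,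
      mul_inv_cancel₀ hm, mul_one]

/-- The summand of the finite form of the Jacobi triple product; as `a, b → ∞` it tends to a
constant multiple of `q ^ k² z ^ k`. -/
def tripleProductTerm (q z : K) (a b : ℕ) (k : ℤ) : K :=
  invQFactorial (q ^ 2) (a - k) * invQFactorial (q ^ 2) (b + k) * (q ^ (k ^ 2) * z ^ k)

lemma tripleProductTerm_neg (q z : K) (a b : ℕ) (k : ℤ) :
    tripleProductTerm q z a b (-k) = tripleProductTerm q z⁻¹ b a k := by
  simp only [tripleProductTerm, inv_zpow', even_two.neg_pow, sub_neg_eq_add, ← sub_eq_add_neg]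
  ring

lemma tripleProductTerm_succ {q z : K} (hq : ∀ n : ℕ, (q ^ 2) ^ (n + 1) ≠ 1) (hq0 : q ≠ 0)
    (hz : z ≠ 0) (a b : ℕ) (k : ℤ) :
    (1 - (q ^ 2) ^ (a + 1 + b)) * tripleProductTerm q z (a + 1) b k =
      tripleProductTerm q z a b k + q ^ (2 * a + 1) * z * tripleProductTerm q z a b (k - 1) := by
  have hu := one_sub_zpow_mul_invQFactorial hq (a + 1 - k)
  have hv := one_sub_zpow_mul_invQFactorial hq (b + k)
  have hpow : q ^ (2 * a + 1) * q ^ ((k - 1) ^ 2) = (q ^ 2) ^ (a + 1 - k : ℤ) * q ^ (k ^ 2) := by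
    rw [← zpow_natCast q, ← zpow_natCast q, ← zpow_mul, ← zpow_add₀ hq0, ← zpow_add₀ hq0]
    congr 1
    push_cast
    ring
  have hsplit : (q ^ 2) ^ (a + 1 + b) = (q ^ 2) ^ (a + 1 - k : ℤ) * (q ^ 2) ^ (b + k : ℤ) := by
    rw [← zpow_add₀ (pow_ne_zero 2 hq0), ← zpow_natCast]
    congr 1
    push_cast
    ring
  have hzk : z * z ^ (k - 1) = z ^ k := by rw [← zpow_one_add₀ hz, add_sub_cancel]
  simp only [tripleProductTerm]
  rw [show (a : ℤ) - k = a + 1 - k - 1 by ring, show (b : ℤ) + (k - 1) = b + k - 1 by ring,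
    show (a : ℤ) - (k - 1) = a + 1 - k by ring, ← hu, ← hv, hsplit, ← hzk]
  push_cast
  linear_combination (-invQFactorial (q ^ 2) (a + 1 - k) * (1 - (q ^ 2) ^ (b + k : ℤ)) *
    invQFactorial (q ^ 2) (b + k) * (z * z ^ (k - 1))) * hpow

variable [TopologicalSpace K]

lemma hasSum_tripleProductTerm_inv {q z s : K} {a b : ℕ} :
    HasSum (tripleProductTerm q z⁻¹ b a) s ↔ HasSum (tripleProductTerm q z a b) s := by
  rw [← (Equiv.neg ℤ).hasSum_iff,
    show tripleProductTerm q z⁻¹ b a ∘ Equiv.neg ℤ = tripleProductTerm q z a b by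
      ext k
      simp [tripleProductTerm_neg]]

variable [IsTopologicalRing K]

lemma hasSum_tripleProductTerm_succ {q z : K} (hq : ∀ n : ℕ, (q ^ 2) ^ (n + 1) ≠ 1)
    (hq0 : q ≠ 0) (hz : z ≠ 0) {a b : ℕ} {A B : K}
    (h : HasSum (tripleProductTerm q z a b) (invQFactorial (q ^ 2) (a + b : ℕ) * A * B)) :
    HasSum (tripleProductTerm q z (a + 1) b)
      (invQFactorial (q ^ 2) (a + 1 + b : ℕ) * (A * (1 - -(q * z) * (q ^ 2) ^ a)) * B) := by
  have hne : 1 - (q ^ 2) ^ (a + 1 + b) ≠ 0 := by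
    rw [add_right_comm]
    exact sub_ne_zero.2 (hq _).symm
  have hshift := h.add (((Equiv.subRight (1 : ℤ)).hasSum_iff.2 h).mul_left (q ^ (2 * a + 1) * z))
  have hstep : (1 - (q ^ 2) ^ (a + 1 + b)) * invQFactorial (q ^ 2) (a + 1 + b : ℕ) =
      invQFactorial (q ^ 2) (a + b : ℕ) := by
    have := one_sub_zpow_mul_invQFactorial hq (a + 1 + b : ℕ)
    rwa [zpow_natCast, show ((a + 1 + b : ℕ) : ℤ) - 1 = (a + b : ℕ) by lia] at this
  refine (hasSum_mul_left_iff hne).1 ?_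
  convert hshift using 1
  · exact funext (tripleProductTerm_succ hq hq0 hz a b)
  · rw [← hstep]
    ring

theorem hasSum_tripleProductTerm {q z : K} (hq : ∀ n : ℕ, (q ^ 2) ^ (n + 1) ≠ 1)
    (hq0 : q ≠ 0) (hz : z ≠ 0) (a b : ℕ) :
    HasSum (tripleProductTerm q z a b)
      (invQFactorial (q ^ 2) (a + b : ℕ) * qPochhammer (-(q * z)) (q ^ 2) a *
        qPochhammer (-(q * z⁻¹)) (q ^ 2) b) := by
  induction b with
  | zero =>
    induction a with
    | zero =>
      convert hasSum_single (f := tripleProductTerm q z 0 0) 0 fun k hk ↦ ?_ using 1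
      · simp [tripleProductTerm, invQFactorial, qPochhammer]
      · rcases hk.lt_or_gt with hk | hk
        · simp [tripleProductTerm, invQFactorial_of_neg _ hk]
        · simp [tripleProductTerm, invQFactorial_of_neg _ (neg_lt_zero.2 hk)]
    | succ a ih =>
      rw [qPochhammer_succ]
      exact hasSum_tripleProductTerm_succ hq hq0 hz ih
  | succ b ih =>
    rw [← hasSum_tripleProductTerm_inv, mul_right_comm, add_comm a] at ih ⊢
    rw [qPochhammer_succ]
    exact hasSum_tripleProductTerm_succ hq hq0 (inv_ne_zero hz) ih

end QPochhammer

section QPochhammerInf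

open Filter Topology

variable {K : Type*} [NormedField K]

/-- The infinite `q`-Pochhammer symbol `(a; p)_∞ = ∏_{i ≥ 0} (1 - a pⁱ)`, meaningful for
`‖p‖ < 1`. -/
noncomputable def qPochhammerInf (a p : K) : K :=
  ∏' i : ℕ, (1 - a * p ^ i)

lemma mul_pow_ne_one {p a : K} (hp : ‖p‖ < 1) (ha : ‖a‖ < 1) (i : ℕ) :
    a * p ^ i ≠ 1 := fun h ↦ by
  have : ‖a‖ * ‖p‖ ^ i = 1 := by rw [← norm_pow, ← norm_mul, h, norm_one]
  exact this.not_lt (mul_lt_one_of_nonneg_of_lt_one_left (norm_nonneg a) ha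
    (pow_le_one₀ (norm_nonneg p) hp.le))

lemma summable_norm_neg_mul_pow {p : K} (hp : ‖p‖ < 1) (a : K) :
    Summable fun i : ℕ ↦ ‖-(a * p ^ i)‖ := by
  simpa only [norm_neg, norm_mul, norm_pow] using
    (summable_geometric_of_lt_one (norm_nonneg p) hp).mul_left ‖a‖

lemma summable_norm_zpow_sq_mul_zpow {q w : K} (hq0 : q ≠ 0) (hq1 : ‖q‖ < 1) (hw : w ≠ 0) :
    Summable fun k : ℤ ↦ ‖q ^ (k ^ 2) * w ^ k‖ := by
  obtain ⟨a, ha⟩ : ∃ a, Real.exp a = ‖q‖ := ⟨_, Real.exp_log (norm_pos_iff.2 hq0)⟩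
  obtain ⟨b, hb⟩ : ∃ b, Real.exp b = ‖w‖ := ⟨_, Real.exp_log (norm_pos_iff.2 hw)⟩
  have ha0 : a < 0 := by rwa [← Real.exp_lt_one_iff, ha]
  have hterm (k : ℤ) : ‖q ^ (k ^ 2) * w ^ k‖ =
      ‖jacobiTheta₂_term k (Complex.I * (-b / (2 * π) : ℝ)) (Complex.I * (-a / π : ℝ))‖ := by
    rw [norm_jacobiTheta₂_term, norm_mul, norm_zpow, norm_zpow, ← ha, ← hb,
      ← Real.rpow_intCast, ← Real.rpow_intCast, ← Real.exp_mul, ← Real.exp_mul, ← Real.exp_add,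
      Complex.I_mul_im, Complex.I_mul_im, Complex.ofReal_re, Complex.ofReal_re]
    congr 1
    push_cast
    field_simp
    ring
  simp only [hterm]
  refine ((summable_jacobiTheta₂_term_iff _ _).2 ?_).norm
  rw [Complex.I_mul_im, Complex.ofReal_re]
  exact div_pos (neg_pos.2 ha0) Real.pi_pos

variable [CompleteSpace K]

lemma multipliable_one_sub_mul_pow {p : K} (hp : ‖p‖ < 1) (a : K) :
    Multipliable fun i : ℕ ↦ 1 - a * p ^ i := by
  simpa only [sub_eq_add_neg] using
    multipliable_one_add_of_summable (summable_norm_neg_mul_pow hp a)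

lemma tendsto_qPochhammer {p : K} (hp : ‖p‖ < 1) (a : K) :
    Tendsto (qPochhammer a p) atTop (𝓝 (qPochhammerInf a p)) :=
  (multipliable_one_sub_mul_pow hp a).hasProd.tendsto_prod_nat

lemma qPochhammerInf_ne_zero {a p : K} (hp : ‖p‖ < 1) (h : ∀ i : ℕ, a * p ^ i ≠ 1) :
    qPochhammerInf a p ≠ 0 := by
  simpa only [qPochhammerInf, sub_eq_add_neg] using
    tprod_one_add_ne_zero_of_summable (fun i ↦ by simpa [← sub_eq_add_neg, sub_eq_zero] using
      (h i).symm) (summable_norm_neg_mul_pow hp a)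

lemma qPochhammerInf_eq_one_sub_mul {p : K} (hp : ‖p‖ < 1) (a : K) :
    qPochhammerInf a p = (1 - a) * qPochhammerInf (a * p) p := by
  have hshift (i : ℕ) : 1 - a * p ^ (i + 1) = 1 - a * p * p ^ i := by rw [pow_succ', mul_assoc]
  have hmul : Multipliable fun i : ℕ ↦ 1 - a * p ^ (i + 1) := by
    simpa only [hshift] using multipliable_one_sub_mul_pow hp (a * p)
  have hsplit := tprod_eq_zero_mul' (f := fun i : ℕ ↦ 1 - a * p ^ i) hmul
  simpa only [qPochhammerInf, pow_zero, mul_one, hshift] using hsplit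

lemma map_qPochhammerInf {L : Type*} [NormedField L] {p : K} (hp : ‖p‖ < 1) (f : K →+* L)
    (hf : Continuous f) (a : K) : f (qPochhammerInf a p) = qPochhammerInf (f a) (f p) := by
  have hmap := (multipliable_one_sub_mul_pow hp a).map_tprod f hf
  simpa only [qPochhammerInf, map_sub, map_mul, map_pow, map_one] using hmap

lemma qPochhammerInf_pos {a p : ℝ} (ha : a < 1) (hp0 : 0 ≤ p) (hp1 : p < 1) :
    0 < qPochhammerInf a p := by
  have hp : ‖p‖ < 1 := by rwa [Real.norm_of_nonneg hp0]
  have hfactor (i : ℕ) : a * p ^ i < 1 :=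
    (mul_le_mul_of_nonneg_right (le_max_left a 0) (pow_nonneg hp0 i)).trans_lt <|
      mul_lt_one_of_nonneg_of_lt_one_left (le_max_right a 0) (max_lt ha one_pos)
        (pow_le_one₀ hp0 hp1.le)
  have hnonneg : 0 ≤ qPochhammerInf a p :=
    ge_of_tendsto' (tendsto_qPochhammer hp a) fun n ↦ Finset.prod_nonneg fun i _ ↦
      sub_nonneg.2 (hfactor i).le
  exact hnonneg.lt_of_ne' (qPochhammerInf_ne_zero hp fun i ↦ (hfactor i).ne)

lemma tendsto_invQFactorial {p : K} (hp : ‖p‖ < 1) :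
    Tendsto (invQFactorial p) atTop (𝓝 (qPochhammerInf p p)⁻¹) := by
  have hnat : Tendsto (fun n : ℕ ↦ invQFactorial p n) atTop (𝓝 (qPochhammerInf p p)⁻¹) :=
    (tendsto_qPochhammer hp p).inv₀ (qPochhammerInf_ne_zero hp (mul_pow_ne_one hp hp))
  rw [← Nat.map_cast_int_atTop]
  exact tendsto_map'_iff.2 hnat

lemma exists_norm_invQFactorial_le {p : K} (hp : ‖p‖ < 1) :
    ∃ C, ∀ n : ℤ, ‖invQFactorial p n‖ ≤ C := by
  obtain ⟨C, hC⟩ :=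
    ((tendsto_invQFactorial hp).comp tendsto_natCast_atTop_atTop).norm.bddAbove_range
  refine ⟨C, fun n ↦ ?_⟩
  have hC0 : 0 ≤ C := (norm_nonneg _).trans (hC ⟨0, rfl⟩)
  rcases lt_or_ge n 0 with hn | hn
  · rwa [invQFactorial_of_neg p hn, norm_zero]
  · lift n to ℕ using hn
    exact hC ⟨n, rfl⟩

lemma tendsto_tsum_tripleProductTerm {q w : K} (hq0 : q ≠ 0) (hq1 : ‖q‖ < 1) (hw : w ≠ 0) :
    Tendsto (fun N : ℕ ↦ ∑' k, tripleProductTerm q w N N k) atTop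
      (𝓝 ((qPochhammerInf (q ^ 2) (q ^ 2))⁻¹ * (qPochhammerInf (q ^ 2) (q ^ 2))⁻¹ *
        ∑' k : ℤ, q ^ (k ^ 2) * w ^ k)) := by
  have hp : ‖q ^ 2‖ < 1 :=
    (norm_pow q 2).trans_lt (pow_lt_one₀ (norm_nonneg q) hq1 two_ne_zero)
  have hlim := tendsto_invQFactorial hp
  have hcast : Tendsto (fun N : ℕ ↦ (N : ℤ)) atTop atTop := tendsto_natCast_atTop_atTop
  obtain ⟨C, hC⟩ := exists_norm_invQFactorial_le hp
  rw [← tsum_mul_left]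
  refine tendsto_tsum_of_dominated_convergence
    (bound := fun k : ℤ ↦ C * C * ‖q ^ (k ^ 2) * w ^ k‖) ?_ (fun k ↦ ?_)
    (.of_forall fun N k ↦ ?_)
  · exact (summable_norm_zpow_sq_mul_zpow hq0 hq1 hw).mul_left _
  · refine ((hlim.comp ?_).mul (hlim.comp ?_)).mul_const _
    · simpa only [sub_eq_add_neg] using tendsto_atTop_add_const_right _ (-k) hcast
    · exact tendsto_atTop_add_const_right _ k hcast
  · rw [tripleProductTerm, norm_mul, norm_mul]
    gcongr
    exacts [(norm_nonneg _).trans (hC 0), hC _, hC _]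

/-- The **Jacobi triple product**. -/
theorem tsum_zpow_sq_mul_zpow {q w : K} (hq0 : q ≠ 0) (hq1 : ‖q‖ < 1) (hw : w ≠ 0) :
    ∑' k : ℤ, q ^ (k ^ 2) * w ^ k = qPochhammerInf (q ^ 2) (q ^ 2) *
      (qPochhammerInf (-(q * w)) (q ^ 2) * qPochhammerInf (-(q * w⁻¹)) (q ^ 2)) := by
  have hp : ‖q ^ 2‖ < 1 :=
    (norm_pow q 2).trans_lt (pow_lt_one₀ (norm_nonneg q) hq1 two_ne_zero)
  have hpow (n : ℕ) : (q ^ 2) ^ (n + 1) ≠ 1 := by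
    rw [pow_succ']
    exact mul_pow_ne_one hp hp n
  have hL := qPochhammerInf_ne_zero hp (mul_pow_ne_one hp hp)
  have hprod : Tendsto (fun N : ℕ ↦ ∑' k, tripleProductTerm q w N N k) atTop
      (𝓝 ((qPochhammerInf (q ^ 2) (q ^ 2))⁻¹ * qPochhammerInf (-(q * w)) (q ^ 2) *
        qPochhammerInf (-(q * w⁻¹)) (q ^ 2))) := by
    simp only [(hasSum_tripleProductTerm hpow hq0 hw _ _).tsum_eq]
    refine (((tendsto_invQFactorial hp).comp ?_).mul (tendsto_qPochhammer hp _)).mul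
      (tendsto_qPochhammer hp _)
    exact tendsto_natCast_atTop_atTop.comp
      (tendsto_atTop_mono (fun N ↦ N.le_add_left N) tendsto_id)
  have heq := tendsto_nhds_unique (tendsto_tsum_tripleProductTerm hq0 hq1 hw) hprod
  rwa [mul_assoc, mul_assoc, mul_right_inj' (inv_ne_zero hL), inv_mul_eq_iff_eq_mul₀ hL] at heq

end QPochhammerInf

section Theta1

open scoped ComplexConjugate ComplexOrder

lemma jacobiTheta₂_term_eq_zpow (k : ℤ) (z τ : ℂ) :
    jacobiTheta₂_term k z τ =
      Complex.exp (π * Complex.I * τ) ^ (k ^ 2) * Complex.exp (2 * π * Complex.I * z) ^ k := by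
  rw [← Complex.exp_int_mul, ← Complex.exp_int_mul, ← Complex.exp_add, jacobiTheta₂_term]
  congr 1
  push_cast
  ring

lemma norm_exp_pi_mul_I_mul_lt_one {τ : ℂ} (hτ : 0 < τ.im) :
    ‖Complex.exp (π * Complex.I * τ)‖ < 1 := by
  rw [Complex.norm_exp, Real.exp_lt_one_iff]
  simp [Real.pi_pos, hτ]

theorem jacobiTheta₂_eq_qPochhammerInf {z τ q w : ℂ} (hτ : 0 < τ.im)
    (hq : q = Complex.exp (π * Complex.I * τ)) (hw : w = Complex.exp (2 * π * Complex.I * z)) :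
    jacobiTheta₂ z τ = qPochhammerInf (q ^ 2) (q ^ 2) *
      (qPochhammerInf (-(q * w)) (q ^ 2) * qPochhammerInf (-(q * w⁻¹)) (q ^ 2)) := by
  have hq1 : ‖q‖ < 1 := hq ▸ norm_exp_pi_mul_I_mul_lt_one hτ
  simp only [jacobiTheta₂, jacobiTheta₂_term_eq_zpow, ← hq, ← hw]
  exact tsum_zpow_sq_mul_zpow (hq ▸ Complex.exp_ne_zero _) hq1 (hw ▸ Complex.exp_ne_zero _)

lemma theta1_eq_jacobiTheta₂ (v : ℂ) {τ : ℂ} (hτ : 0 < τ.im) :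
    theta1 v τ = -Complex.I * Complex.exp (π * Complex.I * τ / 4 + π * Complex.I * v) *
      jacobiTheta₂ (v - 1 / 2 + τ / 2) τ := by
  have hsum := (hasSum_jacobiTheta₂_term (v - 1 / 2 + τ / 2) hτ).nat_add_neg_add_one.mul_left
    (-Complex.I * Complex.exp (π * Complex.I * τ / 4 + π * Complex.I * v))
  rw [← hsum.tsum_eq, theta1, ← tsum_mul_left]
  refine tsum_congr fun n ↦ ?_
  have hsign : (-1 : ℂ) ^ n = Complex.exp (-(n * (π * Complex.I))) := by
    rw [Complex.exp_neg, Complex.exp_nat_mul, Complex.exp_pi_mul_I, ← inv_pow, inv_neg_one]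
  have hsign' : -(-1 : ℂ) ^ n = Complex.exp ((n + 1 : ℕ) * (π * Complex.I)) := by
    rw [Complex.exp_nat_mul, Complex.exp_pi_mul_I, pow_succ, mul_neg_one]
  have hpos : Complex.exp (π * Complex.I * τ / 4 + π * Complex.I * v) *
      jacobiTheta₂_term n (v - 1 / 2 + τ / 2) τ =
      (-1) ^ n * Complex.exp (π * Complex.I * τ * ((n : ℂ) + 1 / 2) ^ 2) *
        Complex.exp ((2 * (n : ℂ) + 1) * π * v * Complex.I) := by
    rw [jacobiTheta₂_term, hsign, ← Complex.exp_add, ← Complex.exp_add, ← Complex.exp_add]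
    congr 1
    push_cast
    ring
  have hneg : Complex.exp (π * Complex.I * τ / 4 + π * Complex.I * v) *
      jacobiTheta₂_term (-((n : ℤ) + 1)) (v - 1 / 2 + τ / 2) τ =
      -(-1) ^ n * Complex.exp (π * Complex.I * τ * ((n : ℂ) + 1 / 2) ^ 2) *
        Complex.exp (-((2 * (n : ℂ) + 1) * π * v) * Complex.I) := by
    rw [jacobiTheta₂_term, hsign', ← Complex.exp_add, ← Complex.exp_add, ← Complex.exp_add]
    congr 1
    push_cast
    ring
  rw [mul_assoc (-Complex.I), mul_add, hpos, hneg, Complex.sin]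
  ring

lemma two_mul_sin_eq (z : ℂ) :
    2 * Complex.sin z =
      -Complex.I * Complex.exp (z * Complex.I) * (1 - Complex.exp (-(2 * z * Complex.I))) := by
  rw [Complex.sin, show -(2 * z * Complex.I) = -z * Complex.I + -z * Complex.I by ring,
    Complex.exp_add, neg_mul, Complex.exp_neg]
  field_simp
  ring

theorem theta1_eq_qPochhammerInf (v : ℂ) {τ p w : ℂ} (hτ : 0 < τ.im)
    (hp : p = Complex.exp (2 * π * Complex.I * τ)) (hw : w = Complex.exp (2 * π * Complex.I * v)) :
    theta1 v τ = 2 * Complex.exp (π * Complex.I * τ / 4) * Complex.sin (π * v) *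
      (qPochhammerInf p p * (qPochhammerInf (p * w) p * qPochhammerInf (p * w⁻¹) p)) := by
  obtain ⟨q, hq⟩ : ∃ q, q = Complex.exp (π * Complex.I * τ) := ⟨_, rfl⟩
  have hq0 : q ≠ 0 := hq ▸ Complex.exp_ne_zero _
  have hqp : q ^ 2 = p := by
    rw [hq, hp, ← Complex.exp_nat_mul]
    congr 1
    push_cast
    ring
  have hp1 : ‖p‖ < 1 := by
    rw [← hqp, norm_pow, hq]
    exact pow_lt_one₀ (norm_nonneg _) (norm_exp_pi_mul_I_mul_lt_one hτ) two_ne_zero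
  have hqw : Complex.exp (2 * π * Complex.I * (v - 1 / 2 + τ / 2)) = -(q * w) := by
    rw [show 2 * π * Complex.I * (v - 1 / 2 + τ / 2) = 2 * π * Complex.I * v + π * Complex.I * τ
      - π * Complex.I by ring, Complex.exp_sub, Complex.exp_add, Complex.exp_pi_mul_I, hq, hw]
    ring
  have htheta : jacobiTheta₂ (v - 1 / 2 + τ / 2) τ =
      qPochhammerInf p p * (qPochhammerInf (p * w) p * qPochhammerInf w⁻¹ p) := by
    rw [jacobiTheta₂_eq_qPochhammerInf hτ hq hqw.symm, inv_neg, mul_neg, mul_neg, neg_neg, neg_neg,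
      mul_inv, mul_inv_cancel_left₀ hq0, ← mul_assoc q, ← sq, hqp]
  have hsin : 2 * Complex.sin (π * v) =
      -Complex.I * Complex.exp (π * Complex.I * v) * (1 - w⁻¹) := by
    rw [two_mul_sin_eq, hw, ← Complex.exp_neg]
    ring_nf
  rw [theta1_eq_jacobiTheta₂ v hτ, htheta, qPochhammerInf_eq_one_sub_mul hp1 w⁻¹, mul_comm w⁻¹,
    Complex.exp_add, mul_right_comm 2, hsin]
  ring

-- The two factors are complex conjugates of each other, since `w⁻¹ = conj w` on the unit circle.
lemma qPochhammerInf_mul_qPochhammerInf_inv_pos {p : ℝ} {w : ℂ} (hp0 : 0 ≤ p) (hp1 : p < 1)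
    (hw : ‖w‖ = 1) : 0 < qPochhammerInf (p * w) p * qPochhammerInf (p * w⁻¹) p := by
  have hp : ‖(p : ℂ)‖ < 1 := by rwa [Complex.norm_of_nonneg hp0]
  have hpw : ‖p * w‖ < 1 := by rwa [norm_mul, hw, mul_one]
  have hconj : qPochhammerInf (p * w⁻¹) p = conj (qPochhammerInf (p * w) p) := by
    rw [map_qPochhammerInf hp conj Complex.continuous_conj, map_mul, Complex.conj_ofReal,
      Complex.inv_eq_conj hw]
  rw [hconj, Complex.mul_conj, Complex.zero_lt_real, Complex.normSq_pos]
  exact qPochhammerInf_ne_zero hp (mul_pow_ne_one hp hpw)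

lemma exists_theta1_eq_mul_sin {κ : ℝ} (hκ : 0 < κ) (v : ℝ) :
    ∃ c : ℂ, 0 < c ∧ theta1 v (Complex.I * κ) = c * Real.sin (π * v) := by
  obtain ⟨p, hp⟩ : ∃ p, p = Real.exp (-(2 * π * κ)) := ⟨_, rfl⟩
  have hp0 : 0 < p := hp ▸ Real.exp_pos _
  have hp1 : p < 1 := by
    rw [hp, Real.exp_lt_one_iff, neg_lt_zero]
    positivity
  have hpτ : (p : ℂ) = Complex.exp (2 * π * Complex.I * (Complex.I * κ)) := by
    rw [hp, Complex.ofReal_exp]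
    congr 1
    push_cast
    linear_combination (-2 * π * κ : ℂ) * Complex.I_sq
  have hexp : Complex.exp (π * Complex.I * (Complex.I * κ) / 4) = Real.exp (-(π * κ / 4)) := by
    rw [Complex.ofReal_exp]
    congr 1
    push_cast
    linear_combination (π * κ / 4 : ℂ) * Complex.I_sq
  have hpp : ((qPochhammerInf p p : ℝ) : ℂ) = qPochhammerInf (p : ℂ) p :=
    map_qPochhammerInf (by rwa [Real.norm_of_nonneg hp0.le]) Complex.ofRealHom
      Complex.continuous_ofReal p
  have hw : ‖Complex.exp (2 * π * Complex.I * v)‖ = 1 := by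
    simp [Complex.norm_exp]
  rw [theta1_eq_qPochhammerInf v (by simpa using hκ) hpτ rfl, hexp, ← Complex.ofReal_mul,
    ← Complex.ofReal_sin, mul_right_comm]
  refine ⟨_, mul_pos (mul_pos two_pos ?_) (mul_pos ?_ ?_), rfl⟩
  · exact_mod_cast Real.exp_pos _
  · rw [← hpp]
    exact_mod_cast qPochhammerInf_pos hp1 hp0.le hp1
  · exact qPochhammerInf_mul_qPochhammerInf_inv_pos hp0.le hp1 hw

lemma theta1_ne_zero {κ v : ℝ} (hκ : 0 < κ) (h : Real.sin v ≠ 0) :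
    theta1 (v / π : ℝ) (Complex.I * κ) ≠ 0 := by
  obtain ⟨c, hc, hv⟩ := exists_theta1_eq_mul_sin hκ (v / π)
  rw [hv, mul_div_cancel₀ _ Real.pi_ne_zero]
  exact mul_ne_zero hc.ne' (Complex.ofReal_ne_zero.2 h)

lemma theta1_div_theta1_pos {κ u v : ℝ} (hκ : 0 < κ) (h : 0 < Real.sin u / Real.sin v) :
    0 < theta1 (u / π : ℝ) (Complex.I * κ) / theta1 (v / π : ℝ) (Complex.I * κ) := by
  obtain ⟨c, hc, hu⟩ := exists_theta1_eq_mul_sin hκ (u / π)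
  obtain ⟨d, hd, hv⟩ := exists_theta1_eq_mul_sin hκ (v / π)
  rw [hu, hv, mul_div_cancel₀ _ Real.pi_ne_zero, mul_div_cancel₀ _ Real.pi_ne_zero,
    mul_div_mul_comm]
  exact mul_pos (div_pos hc hd) (by exact_mod_cast h)

lemma exists_pos_prod_theta1_div_theta1_eq {ι : Type*} [Fintype ι] {κ : ℝ} {u v : ι → ℝ}
    (hκ : 0 < κ) (h : ∀ j, 0 < Real.sin (u j) / Real.sin (v j)) :
    ∃ c : ℝ, 0 < c ∧ ∏ j, theta1 (u j / π : ℝ) (Complex.I * κ) /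
      theta1 (v j / π : ℝ) (Complex.I * κ) = (c : ℂ) := by
  obtain ⟨c, hc, hprod⟩ := RCLike.pos_iff_exists_ofReal.1
    (Finset.prod_pos fun j (_ : j ∈ Finset.univ) ↦ theta1_div_theta1_pos hκ (h j))
  exact ⟨c, hc, hprod.symm⟩

end Theta1

section Weight

open Set

lemma bounds_of_mem_lambdaStar {T : ℕ} {t x : ℤ} (h : (t, x) ∈ LambdaStar T) :
    (2 ≤ t + x ∧ t + x ≤ 2 * T) ∧ (2 ≤ 3 * t - x ∧ 3 * t - x ≤ 6 * T) ∧
      (4 ≤ 3 * t + x ∧ 3 * t + x ≤ 6 * T) ∧ (1 - T ≤ x ∧ x ≤ T) := by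
  simp only [LambdaStar, mem_ofPred_eq] at h
  omega

/-- The lower bounds in (B2) and (B3) together with (B4), after multiplying through by `r` and using
`πλr = (3T - 1)/2`. -/
structure PositivityConditions (T : ℕ) (r α₀ β₀ : ℝ) : Prop where
  lt_alpha : (3 * (T : ℝ) - 1) / 2 < α₀
  lt_neg_beta : (3 * (T : ℝ) - 1) / 2 < -β₀
  alpha_sub_beta_lt : α₀ - β₀ < π * r - (T + 1)

variable {T : ℕ} {r α₀ β₀ : ℝ}

lemma PositivityConditions.of_scaled (hT : 1 ≤ T) (hr : 0 < r) {lam : ℝ}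
    (hlam : lam = (3 * (T : ℝ) - 1) / (2 * π * r))
    (hα : π * lam < α₀ / r) (hβ : π * lam < -β₀ / r)
    (hαβ : (α₀ - β₀) / r < π * (1 - 2 * ((T : ℝ) + 1) / (3 * (T : ℝ) - 1) * lam)) :
    PositivityConditions T r α₀ β₀ := by
  have hd : 3 * (T : ℝ) - 1 ≠ 0 := by
    have : (1 : ℝ) ≤ T := by exact_mod_cast hT
    linarith
  have hlam_r : π * lam * r = (3 * (T : ℝ) - 1) / 2 := by
    rw [hlam]
    field_simp
  have hαβ_r : 2 * ((T : ℝ) + 1) / (3 * (T : ℝ) - 1) * (π * lam * r) = T + 1 := by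
    rw [hlam_r, mul_div_assoc', div_mul_cancel₀ _ hd, mul_div_cancel_left₀ _ two_ne_zero]
  rw [lt_div_iff₀ hr] at hα hβ
  rw [div_lt_iff₀ hr] at hαβ
  constructor <;> linarith

/-- The interval on which `sin` has constant sign that contains both `ζ_j` and `η_j`. -/
noncomputable def signArc : Fin 5 → Set ℝ :=
  ![Ioo 0 π, Ioo (-π) 0, Ioo (-π) 0, Ioo 0 π, Ioo 0 π]

lemma sin_div_sin_pos_of_mem_signArc {j : Fin 5} {u v : ℝ} (hu : u ∈ signArc j)
    (hv : v ∈ signArc j) : 0 < Real.sin u / Real.sin v := by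
  have hpos {u v : ℝ} (hu : u ∈ Ioo 0 π) (hv : v ∈ Ioo 0 π) : 0 < Real.sin u / Real.sin v :=
    div_pos (Real.sin_pos_of_mem_Ioo hu) (Real.sin_pos_of_mem_Ioo hv)
  have hneg {u v : ℝ} (hu : u ∈ Ioo (-π) 0) (hv : v ∈ Ioo (-π) 0) : 0 < Real.sin u / Real.sin v :=
    div_pos_of_neg_of_neg (Real.sin_neg_of_neg_of_neg_pi_lt hu.2 hu.1)
      (Real.sin_neg_of_neg_of_neg_pi_lt hv.2 hv.1)
  fin_cases j
  exacts [hpos hu hv, hneg hu hv, hneg hu hv, hpos hu hv, hpos hu hv]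

lemma PositivityConditions.zetaArg_mem_signArc (h : PositivityConditions T r α₀ β₀) (hr : 0 < r)
    {t x : ℤ} (hmem : (t, x) ∈ LambdaStar T) (j : Fin 5) :
    zetaArg T r α₀ β₀ t x j ∈ signArc j := by
  obtain ⟨hα, hβ, hαβ⟩ := h
  have hbounds := bounds_of_mem_lambdaStar hmem
  rify at hbounds
  fin_cases j <;>
    simp only [zetaArg, signArc, Fin.zero_eta, Fin.mk_one, Fin.reduceFinMk, Matrix.cons_val,
      mem_Ioo] <;>
    constructor <;> field_simp <;> linarith

lemma PositivityConditions.etaArg_mem_signArc (h : PositivityConditions T r α₀ β₀) (hr : 0 < r)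
    {t x : ℤ} (hmem : (t, x) ∈ LambdaStar T) (j : Fin 5) :
    etaArg T r α₀ β₀ t x j ∈ signArc j := by
  obtain ⟨hα, hβ, hαβ⟩ := h
  have hbounds := bounds_of_mem_lambdaStar hmem
  rify at hbounds
  fin_cases j <;>
    simp only [etaArg, signArc, Fin.zero_eta, Fin.mk_one, Fin.reduceFinMk, Matrix.cons_val,
      mem_Ioo] <;>
    constructor <;> field_simp <;> linarith

end Weight

/-- Theorem 5.1: sufficient positivity conditions for the elliptic elementary weight,
hence for the elliptic excursion measure. -/
theorem elliptic_weight_positive (T : ℕ) (hT : 1 ≤ T) (r κ α₀ β₀ : ℝ)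
    (hr : 0 < r) (hκ : 0 < κ) (lam : ℝ) (hlam : lam = (3 * (T : ℝ) - 1) / (2 * π * r))
    (hB1 : 0 ≤ lam ∧ lam < 1 / 2)
    (hB2 : π * lam < α₀ / r ∧ α₀ / r < π * (1 - lam))
    (hB3 : π * lam < -β₀ / r ∧ -β₀ / r < π * (1 - lam))
    (hB4 : (α₀ - β₀) / r < π * (1 - 2 * ((T : ℝ) + 1) / (3 * (T : ℝ) - 1) * lam)) :
    ∀ t x : ℤ, (t, x) ∈ LambdaStar T →
      (∀ j : Fin 5,
        theta1 ((etaArg T r α₀ β₀ t x j / π : ℝ) : ℂ) (Complex.I * κ) ≠ 0) ∧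
      (∃ c : ℝ, 0 < c ∧
        (∏ j : Fin 5,
          theta1 ((zetaArg T r α₀ β₀ t x j / π : ℝ) : ℂ) (Complex.I * κ) /
            theta1 ((etaArg T r α₀ β₀ t x j / π : ℝ) : ℂ) (Complex.I * κ)) = (c : ℂ)) := by
  intro t x hmem
  have hcond := PositivityConditions.of_scaled hT hr hlam hB2.1 hB3.1 hB4
  have hsin (j : Fin 5) := sin_div_sin_pos_of_mem_signArc
    (hcond.zetaArg_mem_signArc hr hmem j) (hcond.etaArg_mem_signArc hr hmem j)
  exact ⟨fun j ↦ theta1_ne_zero hκ (div_ne_zero_iff.1 (hsin j).ne').2,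
    exists_pos_prod_theta1_div_theta1_eq hκ hsin⟩
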